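/- arXiv:2009.06465 — 6 statements merged into one kernel-verified Lean document; each statement's English description precedes it below -/
import Mathlib

section
/- Let n ≥ 2 and let G be a proper subdomain of ℝⁿ (a nonempty open connected set with nonempty boundary). Then for all x, y ∈ G one has j_G(x,y) ≤ 2·ĵ_G(x,y), where j_G is the Euclidean distance-ratio metric and ĵ_G is the chordal distance-ratio metric of G. -/
open Metric Bornology
open scoped Classical

/-- `σ(x) = √(1 + |x|²)`. -/
noncomputable def sigmaFn {n : ℕ} (x : EuclideanSpace ℝ (Fin n)) : ℝ :=
  Real.sqrt (1 + ‖x‖ ^ 2)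

/-- The chordal (spherical) distance between two finite points of the Möbius space
`S̄ⁿ = ℝⁿ ∪ {∞}`: `q(x,y) = |x−y|/(σ(x)σ(y))`. Recall `q(x,∞) = 1/σ(x)`. -/
noncomputable def chordal {n : ℕ} (x y : EuclideanSpace ℝ (Fin n)) : ℝ :=
  ‖x - y‖ / (sigmaFn x * sigmaFn y)

/-- The Euclidean distance-ratio metric
`j_G(x,y) = log(1 + |x−y| / min(d_G(x), d_G(y)))`, where `d_G` is the Euclidean
distance to the boundary of `G`. -/
noncomputable def jDist {n : ℕ} (G : Set (EuclideanSpace ℝ (Fin n)))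
    (x y : EuclideanSpace ℝ (Fin n)) : ℝ :=
  Real.log (1 + ‖x - y‖ /
    min (Metric.infDist x (frontier G)) (Metric.infDist y (frontier G)))

/-- The chordal distance to the boundary of `G` taken in the Möbius space
`S̄ⁿ = ℝⁿ ∪ {∞}`: the boundary of `G` in `S̄ⁿ` is the Euclidean boundary together
with `∞` when `G` is unbounded, and `q(x,∞) = 1/σ(x)`. -/
noncomputable def chordalBdryDist {n : ℕ} (G : Set (EuclideanSpace ℝ (Fin n)))
    (x : EuclideanSpace ℝ (Fin n)) : ℝ :=
  if IsBounded G then ⨅ a : frontier G, chordal x (a : EuclideanSpace ℝ (Fin n))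
  else min (⨅ a : frontier G, chordal x (a : EuclideanSpace ℝ (Fin n))) (1 / sigmaFn x)

/-- The chordal distance-ratio metric
`ĵ_G(x,y) = log(1 + q(x,y) / min(d̂_G(x), d̂_G(y)))`. -/
noncomputable def jChordal {n : ℕ} (G : Set (EuclideanSpace ℝ (Fin n)))
    (x y : EuclideanSpace ℝ (Fin n)) : ℝ :=
  Real.log (1 + chordal x y / min (chordalBdryDist G x) (chordalBdryDist G y))

/-!
Let `d = |x - a|` be the distance from `x` to a nearest boundary point `a`, and set `t = |x - y|`
and `r = q(x,y) / min(d̂(x), d̂(y))`. It suffices to show `1 + t/d ≤ (1 + r)²` and to exchange the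
roles of `x` and `y`.

Two lower bounds for `r` are combined. From `d̂(x) ≤ q(x,a)` one gets `r ≥ (t/d)(σ(a)/σ(y))`.
Moreover `d̂(y) ≤ q(y,∞) = 1/σ(y)` holds even if `G` is bounded, because the ray from `y` pointing
away from the origin then leaves `G` at some `b` (any boundary point, if `y = 0`) with
`|y - b| ≤ |b| ≤ σ(b)`, which means `q(y,b) ≤ 1/σ(y)`; this gives `r ≥ t/σ(x)`. As `σ` is
1-Lipschitz, `σ(x) ≤ σ(a) + d` and `σ(y) ≤ σ(a) + d + t`. The first bound suffices if
`σ(a)² ≥ d(d + t)` and the second one if `σ(a)² ≤ d(d + t)`.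
-/

section BoundedSets

variable {E : Type*} [NormedAddCommGroup E] [NormedSpace ℝ E] {G : Set E} {x u : E}

lemma exists_nonneg_add_smul_notMem (hG : IsBounded G) (x : E) (hu : u ≠ 0) :
    ∃ s : ℝ, 0 ≤ s ∧ x + s • u ∉ G := by
  obtain ⟨R, hR, hGR⟩ := hG.subset_ball_lt 0 x
  refine ⟨R / ‖u‖, by positivity, fun hmem => ?_⟩
  have hlt : ‖(R / ‖u‖) • u‖ < R := by simpa using hGR hmem
  rw [norm_smul, Real.norm_of_nonneg (by positivity),
    div_mul_cancel₀ _ (norm_ne_zero_iff.2 hu)] at hlt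
  exact hlt.false

lemma exists_nonneg_add_smul_mem_frontier (hG : IsBounded G) (hx : x ∈ G) (hu : u ≠ 0) :
    ∃ s : ℝ, 0 ≤ s ∧ x + s • u ∈ frontier G := by
  let ray : NNReal → E := fun s => x + (s : ℝ) • u
  have hray : Continuous ray := by fun_prop
  obtain ⟨s₁, hs₁, hout⟩ := exists_nonneg_add_smul_notMem hG x hu
  obtain ⟨s, hs⟩ : (frontier (ray ⁻¹' G)).Nonempty :=
    nonempty_frontier_iff.2 ⟨⟨0, by simpa [ray] using hx⟩,
      (Set.ne_univ_iff_exists_notMem _).2 ⟨⟨s₁, hs₁⟩, hout⟩⟩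
  exact ⟨s, s.2, hray.frontier_preimage_subset G hs⟩

lemma exists_mem_frontier_norm_sub_le_norm (hG : IsBounded G) (hGbd : (frontier G).Nonempty)
    (hx : x ∈ G) : ∃ b ∈ frontier G, ‖x - b‖ ≤ ‖b‖ := by
  rcases eq_or_ne x 0 with rfl | hx0
  · obtain ⟨b, hb⟩ := hGbd
    exact ⟨b, hb, by simp⟩
  · obtain ⟨s, hs, hb⟩ := exists_nonneg_add_smul_mem_frontier hG hx hx0
    refine ⟨x + s • x, hb, ?_⟩
    calc ‖x - (x + s • x)‖ = s * ‖x‖ := by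
          rw [sub_add_cancel_left, norm_neg, norm_smul, Real.norm_of_nonneg hs]
      _ ≤ (1 + s) * ‖x‖ := by gcongr; linarith
      _ = ‖x + s • x‖ := by
          rw [show x + s • x = (1 + s) • x by module, norm_smul,
            Real.norm_of_nonneg (by positivity)]

end BoundedSets

lemma infDist_frontier_pos {X : Type*} [PseudoMetricSpace X] {G : Set X} (hG : IsOpen G)
    (hGbd : (frontier G).Nonempty) {x : X} (hx : x ∈ G) : 0 < infDist x (frontier G) :=
  (isClosed_frontier.notMem_iff_infDist_pos hGbd).1 fun hxfr => (hG.frontier_eq ▸ hxfr).2 hx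

section RealInequalities

variable {d t A r : ℝ}

lemma one_add_div_le_sq_of_mul_le_sq (hd : 0 < d) (ht : 0 ≤ t) (hA : 0 ≤ A)
    (h : d * (d + t) ≤ A ^ 2) : 1 + t / d ≤ (1 + t / d * (A / (A + d + t))) ^ 2 := by
  have hdiff : (1 + t / d * (A / (A + d + t))) ^ 2 - (1 + t / d) =
      t * (d + t) * (A ^ 2 - d * (d + t)) / (d * (A + d + t)) ^ 2 := by
    field_simp
    ring
  rw [← sub_nonneg, hdiff]
  exact div_nonneg (mul_nonneg (by positivity) (sub_nonneg.2 h)) (by positivity)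

lemma one_add_div_le_sq_of_sq_le_mul (hd : 0 < d) (ht : 0 ≤ t) (hA : 0 ≤ A)
    (h : A ^ 2 ≤ d * (d + t)) : 1 + t / d ≤ (1 + t / (A + d)) ^ 2 := by
  have hdiff : (1 + t / (A + d)) ^ 2 - (1 + t / d) =
      t * (d * (d + t) - A ^ 2) / (d * (A + d) ^ 2) := by
    field_simp
    ring
  rw [← sub_nonneg, hdiff]
  exact div_nonneg (mul_nonneg ht (sub_nonneg.2 h)) (by positivity)

lemma one_add_div_le_one_add_sq (hd : 0 < d) (ht : 0 ≤ t) (hA : 0 ≤ A)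
    (h₁ : t / d * (A / (A + d + t)) ≤ r) (h₂ : t / (A + d) ≤ r) : 1 + t / d ≤ (1 + r) ^ 2 := by
  rcases le_total (d * (d + t)) (A ^ 2) with h | h
  · exact (one_add_div_le_sq_of_mul_le_sq hd ht hA h).trans (by gcongr)
  · exact (one_add_div_le_sq_of_sq_le_mul hd ht hA h).trans (by gcongr)

end RealInequalities

section Chordal

variable {n : ℕ}

lemma sigmaFn_pos (x : EuclideanSpace ℝ (Fin n)) : 0 < sigmaFn x :=
  Real.sqrt_pos.2 (zero_lt_one_add_norm_sq x)

lemma sigmaFn_sq (x : EuclideanSpace ℝ (Fin n)) : sigmaFn x ^ 2 = 1 + ‖x‖ ^ 2 :=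
  Real.sq_sqrt (zero_lt_one_add_norm_sq x).le

lemma norm_le_sigmaFn (x : EuclideanSpace ℝ (Fin n)) : ‖x‖ ≤ sigmaFn x :=
  Real.le_sqrt_of_sq_le (by linarith)

lemma sigmaFn_le_sigmaFn_add_norm_sub (x y : EuclideanSpace ℝ (Fin n)) :
    sigmaFn x ≤ sigmaFn y + ‖x - y‖ := by
  have hσy := sigmaFn_pos y
  refine Real.sqrt_le_iff.2 ⟨by positivity, ?_⟩
  calc 1 + ‖x‖ ^ 2 ≤ 1 + (‖y‖ + ‖x - y‖) ^ 2 := by gcongr; exact norm_le_norm_add_norm_sub' x y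
    _ = sigmaFn y ^ 2 + 2 * ‖y‖ * ‖x - y‖ + ‖x - y‖ ^ 2 := by rw [sigmaFn_sq]; ring
    _ ≤ sigmaFn y ^ 2 + 2 * sigmaFn y * ‖x - y‖ + ‖x - y‖ ^ 2 := by
        gcongr; exact norm_le_sigmaFn y
    _ = (sigmaFn y + ‖x - y‖) ^ 2 := by ring

lemma chordal_nonneg (x y : EuclideanSpace ℝ (Fin n)) : 0 ≤ chordal x y :=
  div_nonneg (norm_nonneg _) (mul_pos (sigmaFn_pos x) (sigmaFn_pos y)).le

lemma chordal_comm (x y : EuclideanSpace ℝ (Fin n)) : chordal x y = chordal y x := by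
  rw [chordal, chordal, norm_sub_rev, mul_comm]

lemma chordal_le_one_div_sigmaFn {x b : EuclideanSpace ℝ (Fin n)} (h : ‖x - b‖ ≤ sigmaFn b) :
    chordal x b ≤ 1 / sigmaFn x := by
  have hσx := sigmaFn_pos x
  have hσb := sigmaFn_pos b
  calc chordal x b ≤ sigmaFn b / (sigmaFn x * sigmaFn b) := by unfold chordal; gcongr
    _ = 1 / sigmaFn x := by field_simp

lemma div_le_chordal {x a : EuclideanSpace ℝ (Fin n)} {δ : ℝ} (hδ : 0 ≤ δ) (h : δ ≤ ‖x - a‖) :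
    δ / (sigmaFn x * (sigmaFn x + δ)) ≤ chordal x a := by
  have hσx := sigmaFn_pos x
  have hσa := sigmaFn_pos a
  have hlip : sigmaFn a ≤ sigmaFn x + ‖x - a‖ :=
    norm_sub_rev a x ▸ sigmaFn_le_sigmaFn_add_norm_sub a x
  calc δ / (sigmaFn x * (sigmaFn x + δ)) ≤ ‖x - a‖ / (sigmaFn x * (sigmaFn x + ‖x - a‖)) := by
        rw [div_le_div_iff₀ (by positivity) (by positivity)]
        nlinarith [mul_le_mul_of_nonneg_left h (sq_nonneg (sigmaFn x))]
    _ ≤ chordal x a := by unfold chordal; gcongr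

lemma le_chordal_div_chordal (x y a : EuclideanSpace ℝ (Fin n)) :
    ‖x - y‖ / ‖x - a‖ * (sigmaFn a / (sigmaFn a + ‖x - a‖ + ‖x - y‖)) ≤
      chordal x y / chordal x a := by
  have hσx := sigmaFn_pos x
  have hσy := sigmaFn_pos y
  have hσa := sigmaFn_pos a
  have hlip : sigmaFn y ≤ sigmaFn a + ‖x - a‖ + ‖x - y‖ := by
    linarith [sigmaFn_le_sigmaFn_add_norm_sub x a, sigmaFn_le_sigmaFn_add_norm_sub y x,
      norm_sub_rev x y]
  calc ‖x - y‖ / ‖x - a‖ * (sigmaFn a / (sigmaFn a + ‖x - a‖ + ‖x - y‖)) ≤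
        ‖x - y‖ / ‖x - a‖ * (sigmaFn a / sigmaFn y) := by gcongr
    _ = chordal x y / chordal x a := by unfold chordal; field_simp

lemma le_chordal_div_one_div_sigmaFn (x y a : EuclideanSpace ℝ (Fin n)) :
    ‖x - y‖ / (sigmaFn a + ‖x - a‖) ≤ chordal x y / (1 / sigmaFn y) := by
  have hσx := sigmaFn_pos x
  have hσy := sigmaFn_pos y
  calc ‖x - y‖ / (sigmaFn a + ‖x - a‖) ≤ ‖x - y‖ / sigmaFn x := by
        gcongr; exact sigmaFn_le_sigmaFn_add_norm_sub x a
    _ = chordal x y / (1 / sigmaFn y) := by unfold chordal; field_simp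

end Chordal

section BoundaryDistance

variable {n : ℕ} {G : Set (EuclideanSpace ℝ (Fin n))} {x y a : EuclideanSpace ℝ (Fin n)}

lemma chordalBdryDist_le_chordal (x : EuclideanSpace ℝ (Fin n)) (ha : a ∈ frontier G) :
    chordalBdryDist G x ≤ chordal x a := by
  have hbdd : BddBelow (Set.range fun b : frontier G => chordal x b) :=
    ⟨0, Set.forall_mem_range.2 fun b => chordal_nonneg x b⟩
  have hinf : (⨅ b : frontier G, chordal x b) ≤ chordal x a := ciInf_le hbdd ⟨a, ha⟩
  unfold chordalBdryDist
  split_ifs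
  · exact hinf
  · exact (min_le_left _ _).trans hinf

lemma le_chordalBdryDist (hGbd : (frontier G).Nonempty) {c : ℝ}
    (hfr : ∀ b ∈ frontier G, c ≤ chordal x b) (hinfty : c ≤ 1 / sigmaFn x) :
    c ≤ chordalBdryDist G x := by
  have : Nonempty (frontier G) := hGbd.to_subtype
  have hinf : c ≤ ⨅ b : frontier G, chordal x b := le_ciInf fun b => hfr b b.2
  unfold chordalBdryDist
  split_ifs
  · exact hinf
  · exact le_min hinf hinfty

lemma chordalBdryDist_le_one_div_sigmaFn (hGbd : (frontier G).Nonempty) (hx : x ∈ G) :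
    chordalBdryDist G x ≤ 1 / sigmaFn x := by
  by_cases hG : IsBounded G
  · obtain ⟨b, hb, hxb⟩ := exists_mem_frontier_norm_sub_le_norm hG hGbd hx
    exact (chordalBdryDist_le_chordal x hb).trans
      (chordal_le_one_div_sigmaFn (hxb.trans (norm_le_sigmaFn b)))
  · rw [chordalBdryDist, if_neg hG]
    exact min_le_right _ _

lemma infDist_div_le_chordalBdryDist (hGbd : (frontier G).Nonempty)
    (x : EuclideanSpace ℝ (Fin n)) :
    infDist x (frontier G) / (sigmaFn x * (sigmaFn x + infDist x (frontier G))) ≤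
      chordalBdryDist G x := by
  have hσ := sigmaFn_pos x
  have hd : 0 ≤ infDist x (frontier G) := infDist_nonneg
  refine le_chordalBdryDist hGbd
    (fun b hb => div_le_chordal hd (dist_eq_norm x b ▸ infDist_le_dist_of_mem hb)) ?_
  rw [div_le_div_iff₀ (by positivity) hσ]
  nlinarith

lemma chordalBdryDist_pos (hGopen : IsOpen G) (hGbd : (frontier G).Nonempty) (hx : x ∈ G) :
    0 < chordalBdryDist G x := by
  have hσ := sigmaFn_pos x
  have hd := infDist_frontier_pos hGopen hGbd hx
  exact lt_of_lt_of_le (by positivity) (infDist_div_le_chordalBdryDist hGbd x)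

lemma one_add_norm_sub_div_infDist_le_sq (hGopen : IsOpen G) (hGbd : (frontier G).Nonempty)
    (hx : x ∈ G) (hy : y ∈ G) :
    1 + ‖x - y‖ / infDist x (frontier G) ≤
      (1 + chordal x y / min (chordalBdryDist G x) (chordalBdryDist G y)) ^ 2 := by
  have hd := infDist_frontier_pos hGopen hGbd hx
  obtain ⟨a, ha, hxa⟩ := isClosed_frontier.exists_infDist_eq_dist hGbd x
  rw [dist_eq_norm] at hxa
  rw [hxa] at hd ⊢
  have hmin : 0 < min (chordalBdryDist G x) (chordalBdryDist G y) :=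
    lt_min (chordalBdryDist_pos hGopen hGbd hx) (chordalBdryDist_pos hGopen hGbd hy)
  have hq := chordal_nonneg x y
  have hmin_a : min (chordalBdryDist G x) (chordalBdryDist G y) ≤ chordal x a :=
    (min_le_left _ _).trans (chordalBdryDist_le_chordal x ha)
  have hmin_infty : min (chordalBdryDist G x) (chordalBdryDist G y) ≤ 1 / sigmaFn y :=
    (min_le_right _ _).trans (chordalBdryDist_le_one_div_sigmaFn hGbd hy)
  exact one_add_div_le_one_add_sq hd (norm_nonneg _) (sigmaFn_pos a).le
    ((le_chordal_div_chordal x y a).trans (by gcongr))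
    ((le_chordal_div_one_div_sigmaFn x y a).trans (by gcongr))

end BoundaryDistance

lemma jDist_comm {n : ℕ} (G : Set (EuclideanSpace ℝ (Fin n)))
    (x y : EuclideanSpace ℝ (Fin n)) : jDist G x y = jDist G y x := by
  rw [jDist, jDist, norm_sub_rev, min_comm]

lemma jChordal_comm {n : ℕ} (G : Set (EuclideanSpace ℝ (Fin n)))
    (x y : EuclideanSpace ℝ (Fin n)) : jChordal G x y = jChordal G y x := by
  rw [jChordal, jChordal, chordal_comm, min_comm]

theorem j_le_two_jhat_general {n : ℕ} {G : Set (EuclideanSpace ℝ (Fin n))} (hGopen : IsOpen G)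
    (hGbd : (frontier G).Nonempty) {x y : EuclideanSpace ℝ (Fin n)} (hx : x ∈ G) (hy : y ∈ G) :
    jDist G x y ≤ 2 * jChordal G x y := by
  wlog hxy : infDist x (frontier G) ≤ infDist y (frontier G) generalizing x y
  · rw [jDist_comm, jChordal_comm]
    exact this hy hx (le_of_not_ge hxy)
  have hd := infDist_frontier_pos hGopen hGbd hx
  calc jDist G x y = Real.log (1 + ‖x - y‖ / infDist x (frontier G)) := by
        rw [jDist, min_eq_left hxy]
    _ ≤ Real.log ((1 + chordal x y / min (chordalBdryDist G x) (chordalBdryDist G y)) ^ 2) :=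
        Real.log_le_log (by positivity) (one_add_norm_sub_div_infDist_le_sq hGopen hGbd hx hy)
    _ = 2 * jChordal G x y := by rw [Real.log_pow, jChordal, Nat.cast_ofNat]

/-- For a proper subdomain `G` of `ℝⁿ` (`n ≥ 2`) and all `x, y ∈ G`, one has
`j_G(x,y) ≤ 2·ĵ_G(x,y)`. -/
theorem j_le_two_jhat {n : ℕ} (hn : 2 ≤ n) (G : Set (EuclideanSpace ℝ (Fin n)))
    (hGopen : IsOpen G) (hGconn : IsConnected G) (hGbd : (frontier G).Nonempty)
    (x y : EuclideanSpace ℝ (Fin n)) (hx : x ∈ G) (hy : y ∈ G) :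
    jDist G x y ≤ 2 * jChordal G x y :=
  j_le_two_jhat_general hGopen hGbd hx hy
end

section
/- For every real x > 0 one has μ(tanh x) < π²/(4x), i.e. (π/2)·K(√(1 − tanh²x))/K(tanh x) < π²/(4x). -/
open Real MeasureTheory

/-- The complete elliptic integral of the first kind
`K(r) = ∫₀^{π/2} dt / √(1 − r² sin² t)`. -/
noncomputable def ellK (r : ℝ) : ℝ :=
  ∫ t in (0:ℝ)..(Real.pi / 2), 1 / Real.sqrt (1 - r ^ 2 * Real.sin t ^ 2)

/-- The modulus of the plane Grötzsch ring, `μ(r) = (π/2)·K(√(1−r²))/K(r)`. -/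
noncomputable def muGrotzsch (r : ℝ) : ℝ :=
  (Real.pi / 2) * ellK (Real.sqrt (1 - r ^ 2)) / ellK r

/-!
Both elliptic integrals are compared with elementary ones. Bounding `sin² t` by `1` in the integrand
gives `K(√(1 - r²)) ≤ π / (2 r)`. Multiplying the integrand by `sin t`, which is less than `1`
at `t = 0`, decreases the integral strictly and makes it elementary, whence `artanh r / r < K(r)`.
The quotient of the two bounds, at `r = tanh x`, is the assertion.
-/

variable {r : ℝ}

lemma one_sub_sq_pos_of_mem_Ioo (hr : r ∈ Set.Ioo (-1) 1) : 0 < 1 - r ^ 2 :=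
  sub_pos.2 ((sq_lt_one_iff_abs_lt_one r).2 (abs_lt.2 hr))

lemma one_sub_sq_le_one_sub_sq_mul_sin_sq (r t : ℝ) : 1 - r ^ 2 ≤ 1 - r ^ 2 * sin t ^ 2 :=
  sub_le_sub_left (mul_le_of_le_one_right (sq_nonneg r) (sin_sq_le_one t)) 1

lemma sqrt_one_sub_sq_mul_sin_sq_pos (hr : r ∈ Set.Ioo (-1) 1) (t : ℝ) :
    0 < √(1 - r ^ 2 * sin t ^ 2) :=
  sqrt_pos.2 ((one_sub_sq_pos_of_mem_Ioo hr).trans_le (one_sub_sq_le_one_sub_sq_mul_sin_sq r t))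

lemma continuous_div_sqrt_one_sub_sq_mul_sin_sq {f : ℝ → ℝ} (hf : Continuous f)
    (hr : r ∈ Set.Ioo (-1) 1) : Continuous fun t ↦ f t / √(1 - r ^ 2 * sin t ^ 2) :=
  hf.div (by fun_prop) fun t ↦ (sqrt_one_sub_sq_mul_sin_sq_pos hr t).ne'

theorem ellK_le (hr : r ∈ Set.Ioo (-1) 1) : ellK r ≤ π / (2 * √(1 - r ^ 2)) := by
  have hr' : 0 < √(1 - r ^ 2) := sqrt_pos.2 (one_sub_sq_pos_of_mem_Ioo hr)
  calc ellK r ≤ ∫ _ in (0 : ℝ)..π / 2, 1 / √(1 - r ^ 2) :=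
        intervalIntegral.integral_mono_on pi_div_two_pos.le
          ((continuous_div_sqrt_one_sub_sq_mul_sin_sq continuous_const hr).intervalIntegrable _ _)
          intervalIntegrable_const fun t _ ↦ one_div_le_one_div_of_le hr'
            (sqrt_le_sqrt (one_sub_sq_le_one_sub_sq_mul_sin_sq r t))
    _ = π / (2 * √(1 - r ^ 2)) := by
        rw [intervalIntegral.integral_const, smul_eq_mul]
        ring

theorem ellK_sqrt_one_sub_sq_le (hr : r ∈ Set.Ioc 0 1) : ellK √(1 - r ^ 2) ≤ π / (2 * r) := by
  obtain ⟨hr0, hr1⟩ := hr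
  have hsq : √(1 - r ^ 2) ^ 2 = 1 - r ^ 2 := sq_sqrt (sub_nonneg.2 (pow_le_one₀ hr0.le hr1))
  have hmem : √(1 - r ^ 2) ∈ Set.Ioo (-1) 1 :=
    ⟨by linarith [sqrt_nonneg (1 - r ^ 2)], (sqrt_lt' one_pos).2 (by linarith [pow_pos hr0 2])⟩
  simpa only [hsq, sub_sub_cancel, sqrt_sq hr0.le] using ellK_le hmem

lemma hasDerivAt_neg_arsinh_mul_cos (hr : r ∈ Set.Ioo (-1) 1) (t : ℝ) :
    HasDerivAt (fun t ↦ -arsinh (r / √(1 - r ^ 2) * cos t))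
      (r * (sin t / √(1 - r ^ 2 * sin t ^ 2))) t := by
  have hr2 := one_sub_sq_pos_of_mem_Ioo hr
  have hradicand : 1 + (r / √(1 - r ^ 2) * cos t) ^ 2 =
      (1 - r ^ 2 * sin t ^ 2) / (1 - r ^ 2) := by
    rw [mul_pow, div_pow, sq_sqrt hr2.le, cos_sq']
    field_simp
    ring
  have hsqrt : √(1 + (r / √(1 - r ^ 2) * cos t) ^ 2) =
      √(1 - r ^ 2 * sin t ^ 2) / √(1 - r ^ 2) := by
    rw [hradicand, sqrt_div' _ hr2.le]
  refine ((hasDerivAt_cos t).const_mul (r / √(1 - r ^ 2))).arsinh.neg.congr_deriv ?_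
  have hden : 0 < √(1 - r ^ 2 * sin t ^ 2) := sqrt_one_sub_sq_mul_sin_sq_pos hr t
  rw [hsqrt, smul_eq_mul]
  field_simp

theorem integral_sin_div_sqrt_one_sub_sq_mul_sin_sq (hr : r ∈ Set.Ioo (-1) 1) (hr0 : r ≠ 0) :
    ∫ t in (0 : ℝ)..π / 2, sin t / √(1 - r ^ 2 * sin t ^ 2) = artanh r / r := by
  have hcont := continuous_div_sqrt_one_sub_sq_mul_sin_sq continuous_sin hr
  rw [eq_div_iff hr0, mul_comm, ← intervalIntegral.integral_const_mul,
    intervalIntegral.integral_eq_sub_of_hasDerivAt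
      (fun t _ ↦ hasDerivAt_neg_arsinh_mul_cos hr t)
      ((hcont.const_mul r).intervalIntegrable _ _),
    ← sinh_artanh hr]
  simp

theorem artanh_div_lt_ellK (hr : r ∈ Set.Ioo (-1) 1) (hr0 : r ≠ 0) : artanh r / r < ellK r := by
  rw [← integral_sin_div_sqrt_one_sub_sq_mul_sin_sq hr hr0]
  refine intervalIntegral.integral_lt_integral_of_continuousOn_of_le_of_exists_lt pi_div_two_pos
    (continuous_div_sqrt_one_sub_sq_mul_sin_sq continuous_sin hr).continuousOn
    (continuous_div_sqrt_one_sub_sq_mul_sin_sq continuous_const hr).continuousOn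
    (fun t _ ↦ ?_) ⟨0, Set.left_mem_Icc.2 pi_div_two_pos.le, by simp⟩
  gcongr
  exact sin_le_one t

theorem muGrotzsch_lt_pi_sq_div_four_mul_artanh (hr : r ∈ Set.Ioo 0 1) :
    muGrotzsch r < π ^ 2 / (4 * artanh r) := by
  obtain ⟨hr0, hr1⟩ := hr
  have hartanh : 0 < artanh r := artanh_pos ⟨hr0, hr1⟩
  have hK' : ellK √(1 - r ^ 2) ≤ π / (2 * r) := ellK_sqrt_one_sub_sq_le ⟨hr0, hr1.le⟩
  have hK : artanh r / r < ellK r := artanh_div_lt_ellK ⟨neg_one_lt_zero.trans hr0, hr1⟩ hr0.ne'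
  calc muGrotzsch r = π / 2 * ellK √(1 - r ^ 2) / ellK r := rfl
    _ < π / 2 * (π / (2 * r)) / (artanh r / r) :=
        div_lt_div₀' (mul_le_mul_of_nonneg_left hK' pi_div_two_pos.le) hK (by positivity)
          (div_pos hartanh hr0)
    _ = π ^ 2 / (4 * artanh r) := by
        field_simp
        norm_num

/-- For every `x > 0` one has `μ(tanh x) < π²/(4x)`. -/
theorem mu_tanh_lt (x : ℝ) (hx : 0 < x) :
    muGrotzsch (Real.tanh x) < Real.pi ^ 2 / (4 * x) := by
  have htanh : 0 < tanh x := by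
    rw [tanh_eq_sinh_div_cosh]
    exact div_pos (sinh_pos_iff.2 hx) (cosh_pos x)
  simpa only [artanh_tanh] using muGrotzsch_lt_pi_sq_div_four_mul_artanh ⟨htanh, tanh_lt_one x⟩
end

section
/- For all real numbers s ≥ 1, τ ≥ 1 and φ ∈ [0,1], one has 2φ/(sτ) + log s ≤ M₀·log(1 + log(1 + √((e^{(s−1)τ} − 1)² + 4φ²·e^{(s−1)τ}))), where M₀ = 2/log(1 + log 3). Equality holds at s = τ = φ = 1. -/
/-!
Put `x = exp ((s - 1) * τ)`. The radicand `(x - 1) ^ 2 + 4 * φ ^ 2 * x` equals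
`(1 - φ ^ 2) * (x - 1) ^ 2 + φ ^ 2 * (x + 1) ^ 2`, so its root is at least both `x - 1` and
`φ * (x + 1)`; the two bounds agree at `φ₀ = (x - 1) / (x + 1) = tanh ((s - 1) * τ / 2)`.

For `φ ≤ φ₀` the bound `x - 1` already gives at least `M₀ * log s` on the right, while
`tanh u ≤ u` gives `2 * φ / (s * τ) ≤ (s - 1) / s ≤ log s`; hence `M₀ ≥ 2` suffices.

For `φ₀ ≤ φ ≤ 1` the bound `φ * (x + 1)` makes the right side concave in `φ`, whereas the left side
is affine, so only `φ = φ₀` and `φ = 1` matter. At `φ = 1` the left side is at most `2`, its value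
at `s = τ = 1`, as long as `s ≤ 2`; for `s ≥ 2` the coarse bound `M₀ ≥ 5 / 2` suffices.
-/

open Real Set

/-- The constant `M₀` of the inequality, chosen so that equality holds at `s = τ = φ = 1`. -/
noncomputable def logMobiusConst : ℝ := 2 / log (1 + log 3)

/-- The function through which the right side of the inequality depends on the relative distance
`|z₁ - z₂| / |z₁|`. It is used for `0 ≤ y`, where both logarithms have arguments at least `1`. -/
noncomputable def iteratedLog (y : ℝ) : ℝ := log (1 + log (1 + y))

/-- The distance from `1` to the point with modulus `x` and argument `θ`, where `φ = sin (θ / 2)`: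
the law of cosines with `2 * (1 - cos θ) = 4 * φ ^ 2`. -/
noncomputable def polarDist (x φ : ℝ) : ℝ := √((x - 1) ^ 2 + 4 * φ ^ 2 * x)

/-- The value `φ₀` of `φ` at which the lower bounds `x - 1` and `φ * (x + 1)` of `polarDist x φ`
agree. -/
noncomputable def criticalSine (x : ℝ) : ℝ := (x - 1) / (x + 1)

lemma criticalSine_nonneg {x : ℝ} (hx : 1 ≤ x) : 0 ≤ criticalSine x :=
  div_nonneg (by linarith) (by linarith)

lemma criticalSine_mul_add_one {x : ℝ} (hx : x + 1 ≠ 0) : criticalSine x * (x + 1) = x - 1 :=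
  div_mul_cancel₀ _ hx

lemma sub_one_le_polarDist {x : ℝ} (hx : 0 ≤ x) (φ : ℝ) : x - 1 ≤ polarDist x φ :=
  le_sqrt_of_sq_le <| le_add_of_nonneg_right (by positivity)

lemma mul_add_one_le_polarDist {φ : ℝ} (hφ : |φ| ≤ 1) (x : ℝ) :
    φ * (x + 1) ≤ polarDist x φ := by
  have hφ_sq : 0 ≤ 1 - φ ^ 2 := sub_nonneg.2 ((sq_le_one_iff_abs_le_one φ).2 hφ)
  apply le_sqrt_of_sq_le
  calc (φ * (x + 1)) ^ 2
      ≤ (1 - φ ^ 2) * (x - 1) ^ 2 + (φ * (x + 1)) ^ 2 := le_add_of_nonneg_left (by positivity)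
    _ = (x - 1) ^ 2 + 4 * φ ^ 2 * x := by ring

@[gcongr]
lemma iteratedLog_le_iteratedLog {x y : ℝ} (hx : 0 ≤ x) (hxy : x ≤ y) :
    iteratedLog x ≤ iteratedLog y := by
  have hlog : 0 ≤ log (1 + x) := log_nonneg (by linarith)
  unfold iteratedLog
  gcongr

lemma concaveOn_log_one_add : ConcaveOn ℝ (Ici 0) fun y : ℝ ↦ log (1 + y) :=
  (strictConcaveOn_log_Ioi.concaveOn.translate_right 1).subset
    (fun y (hy : 0 ≤ y) ↦ show 0 < 1 + y by linarith) (convex_Ici 0)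

lemma concaveOn_iteratedLog : ConcaveOn ℝ (Ici 0) iteratedLog := by
  have log_mem {y : ℝ} (hy : y ∈ Ici 0) : log (1 + y) ∈ Ici 0 :=
    log_nonneg (le_add_of_nonneg_right hy)
  refine ⟨convex_Ici 0, fun x hx y hy a b ha hb hab ↦ ?_⟩
  calc a • iteratedLog x + b • iteratedLog y
      ≤ log (1 + (a • log (1 + x) + b • log (1 + y))) :=
        concaveOn_log_one_add.2 (log_mem hx) (log_mem hy) ha hb hab
    _ ≤ iteratedLog (a • x + b • y) := by
        have hpos : 0 ≤ a • log (1 + x) + b • log (1 + y) :=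
          convex_Ici 0 (log_mem hx) (log_mem hy) ha hb hab
        exact log_le_log (by linarith)
          (add_le_add_right (concaveOn_log_one_add.2 hx hy ha hb hab) 1)

lemma iteratedLog_exp_sub_one (t : ℝ) : iteratedLog (exp t - 1) = log (1 + t) := by
  simp [iteratedLog]

lemma affine_le_of_concaveOn {𝕜 : Type*} [Field 𝕜] [LinearOrder 𝕜] [IsStrictOrderedRing 𝕜]
    {f : 𝕜 → 𝕜} {S : Set 𝕜} {a b m k x : 𝕜} (hf : ConcaveOn 𝕜 S f)
    (ha : a ∈ S) (hb : b ∈ S) (hfa : m * a + k ≤ f a) (hfb : m * b + k ≤ f b)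
    (hx : x ∈ Icc a b) : m * x + k ≤ f x := by
  have hlin : ConvexOn 𝕜 S fun y ↦ m * y :=
    (LinearMap.mulLeft 𝕜 m).convexOn hf.1
  have hseg : x ∈ segment 𝕜 a b := Icc_subset_segment hx
  have hmin : min (f a - m * a) (f b - m * b) ≤ f x - m * x :=
    (hf.sub hlin).ge_on_segment ha hb hseg
  have hk : k ≤ min (f a - m * a) (f b - m * b) := le_min (by linarith) (by linarith)
  linarith

lemma log_one_add_log_three_pos : 0 < log (1 + log 3) :=
  log_pos (by linarith [log_three_gt_d9])

lemma logMobiusConst_mul_iteratedLog_two : logMobiusConst * iteratedLog 2 = 2 := by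
  rw [logMobiusConst, iteratedLog, show (1 : ℝ) + 2 = 3 by norm_num]
  exact div_mul_cancel₀ 2 log_one_add_log_three_pos.ne'

lemma five_halves_le_logMobiusConst : 5 / 2 ≤ logMobiusConst := by
  have hlog : log (1 + log 3) ≤ 4 / 5 := by
    rw [log_le_iff_le_exp (by linarith [log_three_gt_d9])]
    calc 1 + log 3 ≤ 1 + 4 / 5 + (4 / 5) ^ 2 / 2 := by linarith [log_three_lt_d9]
      _ ≤ exp (4 / 5) := quadratic_le_exp_of_nonneg (by norm_num)
  rw [logMobiusConst, le_div_iff₀ log_one_add_log_three_pos]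
  linarith

/-- This is `tanh u ≤ u` at `u = t / 2`. -/
lemma two_mul_criticalSine_exp_le {t : ℝ} (ht : 0 ≤ t) : 2 * criticalSine (exp t) ≤ t := by
  calc 2 * criticalSine (exp t) = 2 * (exp t - 1) / (exp t - 1 + 2) := by
        rw [criticalSine]
        ring
    _ ≤ log (1 + (exp t - 1)) := le_log_one_add_of_nonneg (by linarith [one_le_exp ht])
    _ = t := by rw [add_sub_cancel, log_exp]

section Parameters

variable {s τ φ : ℝ}

lemma log_le_iteratedLog_exp_sub_one (hs : 1 ≤ s) (hτ : 1 ≤ τ) :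
    log s ≤ iteratedLog (exp ((s - 1) * τ) - 1) := by
  rw [iteratedLog_exp_sub_one]
  gcongr
  nlinarith

lemma two_mul_div_le_log_of_le_criticalSine (hs : 1 ≤ s) (hτ : 0 < τ)
    (hφ : φ ≤ criticalSine (exp ((s - 1) * τ))) :
    2 * φ / (s * τ) ≤ log s := by
  have ht : 0 ≤ (s - 1) * τ := mul_nonneg (by linarith) hτ.le
  have hs₀ : 0 < s := by linarith
  calc 2 * φ / (s * τ) ≤ (s - 1) * τ / (s * τ) := by
        have hφt : 2 * φ ≤ (s - 1) * τ := by linarith [two_mul_criticalSine_exp_le ht]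
        exact div_le_div_of_nonneg_right hφt (by positivity)
    _ = 1 - s⁻¹ := by field_simp
    _ ≤ log s := one_sub_inv_le_log_of_pos hs₀

lemma two_mul_div_add_log_le_of_le_criticalSine (hs : 1 ≤ s) (hτ : 1 ≤ τ)
    (hφ : φ ≤ criticalSine (exp ((s - 1) * τ))) :
    2 * φ / (s * τ) + log s ≤ logMobiusConst * iteratedLog (exp ((s - 1) * τ) - 1) := by
  have hM : 2 ≤ logMobiusConst := by linarith [five_halves_le_logMobiusConst]
  have hlog : 0 ≤ log s := log_nonneg hs
  calc 2 * φ / (s * τ) + log s ≤ 2 * log s := by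
        linarith [two_mul_div_le_log_of_le_criticalSine hs (by linarith) hφ]
    _ ≤ logMobiusConst * iteratedLog (exp ((s - 1) * τ) - 1) := by
        gcongr
        exact log_le_iteratedLog_exp_sub_one hs hτ

lemma two_div_add_log_le_two (hs : 1 ≤ s) (hs₂ : s ≤ 2) : 2 / s + log s ≤ 2 := by
  have hs₀ : 0 < s := by linarith
  have hdiv : 2 / s ≤ 3 - s := by
    rw [div_le_iff₀ hs₀]
    nlinarith
  linarith [log_le_sub_one_of_pos hs₀]

lemma two_div_add_log_le_five_halves_mul_log (hs : 2 ≤ s) : 2 / s + log s ≤ 5 / 2 * log s := by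
  have hdiv : 2 / s ≤ 1 := div_le_one_of_le₀ hs (by linarith)
  have hlog : log 2 ≤ log s := log_le_log two_pos hs
  linarith [log_two_gt_d9]

lemma two_div_add_log_le (hs : 1 ≤ s) (hτ : 1 ≤ τ) :
    2 / (s * τ) + log s ≤ logMobiusConst * iteratedLog (exp ((s - 1) * τ) + 1) := by
  have hM := five_halves_le_logMobiusConst
  have hx : 1 ≤ exp ((s - 1) * τ) := one_le_exp (mul_nonneg (by linarith) (by linarith))
  calc 2 / (s * τ) + log s ≤ 2 / s + log s := by
        gcongr
        exact le_mul_of_one_le_right (by linarith) hτ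
    _ ≤ logMobiusConst * iteratedLog (exp ((s - 1) * τ) + 1) := by
        rcases le_total s 2 with hs₂ | hs₂
        · calc 2 / s + log s ≤ 2 := two_div_add_log_le_two hs hs₂
            _ = logMobiusConst * iteratedLog 2 := logMobiusConst_mul_iteratedLog_two.symm
            _ ≤ _ := by
                gcongr
                linarith
        · have hlog : 0 ≤ log s := log_nonneg hs
          calc 2 / s + log s ≤ 5 / 2 * log s := two_div_add_log_le_five_halves_mul_log hs₂
            _ ≤ logMobiusConst * iteratedLog (exp ((s - 1) * τ) - 1) := by
                gcongr
                exact log_le_iteratedLog_exp_sub_one hs hτ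
            _ ≤ _ := by
                gcongr
                linarith

lemma two_mul_div_add_log_le_of_criticalSine_le (hs : 1 ≤ s) (hτ : 1 ≤ τ)
    (hφ₀ : criticalSine (exp ((s - 1) * τ)) ≤ φ) (hφ₁ : φ ≤ 1) :
    2 * φ / (s * τ) + log s ≤ logMobiusConst * iteratedLog (φ * (exp ((s - 1) * τ) + 1)) := by
  have hleft := two_mul_div_add_log_le_of_le_criticalSine hs hτ le_rfl
  have hright := two_div_add_log_le hs hτ
  have hx : 1 ≤ exp ((s - 1) * τ) := one_le_exp (mul_nonneg (by linarith) (by linarith))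
  generalize exp ((s - 1) * τ) = x at *
  have hx₁ : 0 < x + 1 := by linarith
  have hconcave : ConcaveOn ℝ (Ici 0) fun ψ ↦ logMobiusConst * iteratedLog (ψ * (x + 1)) :=
    ((concaveOn_iteratedLog.comp_linearMap (LinearMap.mulRight ℝ (x + 1))).subset
      (fun ψ hψ ↦ mul_nonneg hψ hx₁.le) (convex_Ici 0)).smul
      (by linarith [five_halves_le_logMobiusConst])
  have haffine := affine_le_of_concaveOn (m := 2 / (s * τ)) (k := log s) hconcave
    (criticalSine_nonneg hx) (mem_Ici.2 zero_le_one)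
    (by rwa [criticalSine_mul_add_one hx₁.ne', div_mul_eq_mul_div]) (by simpa using hright)
    ⟨hφ₀, hφ₁⟩
  rwa [div_mul_eq_mul_div] at haffine

theorem core_inequality_general (hs : 1 ≤ s) (hτ : 1 ≤ τ) (hφ : φ ≤ 1) :
    2 * φ / (s * τ) + log s ≤
      logMobiusConst * iteratedLog (polarDist (exp ((s - 1) * τ)) φ) := by
  have hM := five_halves_le_logMobiusConst
  have hx : 1 ≤ exp ((s - 1) * τ) := one_le_exp (mul_nonneg (by linarith) (by linarith))
  rcases le_total φ (criticalSine (exp ((s - 1) * τ))) with hle | hge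
  · calc 2 * φ / (s * τ) + log s
        ≤ logMobiusConst * iteratedLog (exp ((s - 1) * τ) - 1) :=
          two_mul_div_add_log_le_of_le_criticalSine hs hτ hle
      _ ≤ logMobiusConst * iteratedLog (polarDist (exp ((s - 1) * τ)) φ) := by
          gcongr
          exact sub_one_le_polarDist (by positivity) φ
  · have hφ₀ : 0 ≤ φ := (criticalSine_nonneg hx).trans hge
    calc 2 * φ / (s * τ) + log s
        ≤ logMobiusConst * iteratedLog (φ * (exp ((s - 1) * τ) + 1)) :=
          two_mul_div_add_log_le_of_criticalSine_le hs hτ hge hφ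
      _ ≤ logMobiusConst * iteratedLog (polarDist (exp ((s - 1) * τ)) φ) := by
          gcongr
          exact mul_add_one_le_polarDist (by rwa [abs_of_nonneg hφ₀]) _

end Parameters

lemma polarDist_one_one : polarDist 1 1 = 2 := by
  rw [polarDist, show ((1 : ℝ) - 1) ^ 2 + 4 * 1 ^ 2 * 1 = 2 ^ 2 by norm_num]
  exact sqrt_sq zero_le_two

/-- For all `s ≥ 1`, `τ ≥ 1`, `φ ∈ [0,1]`:
`2φ/(sτ) + log s ≤ M₀ · log(1 + log(1 + √((e^{(s−1)τ} − 1)² + 4φ²·e^{(s−1)τ})))`,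
where `M₀ = 2/log(1 + log 3)`; moreover equality holds at `s = τ = φ = 1`. -/
theorem core_inequality :
    (∀ s τ φ : ℝ, 1 ≤ s → 1 ≤ τ → 0 ≤ φ → φ ≤ 1 →
      2 * φ / (s * τ) + Real.log s ≤
        (2 / Real.log (1 + Real.log 3)) *
          Real.log (1 + Real.log (1 + Real.sqrt
            ((Real.exp ((s - 1) * τ) - 1) ^ 2 +
              4 * φ ^ 2 * Real.exp ((s - 1) * τ)))))
    ∧
    2 * (1:ℝ) / (1 * 1) + Real.log 1 =
      (2 / Real.log (1 + Real.log 3)) *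
        Real.log (1 + Real.log (1 + Real.sqrt
          ((Real.exp (((1:ℝ) - 1) * 1) - 1) ^ 2 +
            4 * (1:ℝ) ^ 2 * Real.exp (((1:ℝ) - 1) * 1)))) := by
  refine ⟨fun s τ φ hs hτ _ hφ ↦ core_inequality_general hs hτ hφ, ?_⟩
  change 2 * (1 : ℝ) / (1 * 1) + log 1 =
    logMobiusConst * iteratedLog (polarDist (exp ((1 - 1) * 1)) 1)
  rw [sub_self, zero_mul, exp_zero, polarDist_one_one, logMobiusConst_mul_iteratedLog_two, log_one]
  norm_num
end

section
/- Let n ≥ 2 and let S̄ⁿ = ℝⁿ ∪ {∞} be the one-point compactification of ℝⁿ. Let G ⊆ S̄ⁿ be a domain whose complement C = S̄ⁿ \ G contains at least two points, and let R ⊆ S̄ⁿ be a ring with complementary components E₁ and E₂. Then R separates C if and only if R separates ∂G (the boundary of G in S̄ⁿ). -/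
/-!
Let `K` be the complement of `G`. If `R ⊆ G`, then `K` lies in the union of the disjoint closed sets
`E₁` and `E₂`, so its boundary splits accordingly: `∂G ∩ Eᵢ = ∂(K ∩ Eᵢ)`. In a connected space this
is nonempty exactly when `K ∩ Eᵢ` is neither empty nor the whole space. Hence `K` meets both `Eᵢ` if
and only if `∂G` does.

It remains to see that separating either set forces `R ⊆ G`. For `K` this is immediate. If the
connected set `R` misses `∂G` without lying in `G`, then it misses `closure G`; being connected,
`closure G` lies in one of `E₁`, `E₂`, so `∂G` does not meet the other.
-/

open OnePoint

/-- A ring `R` with complementary components `E₁`, `E₂` separates a set `A` if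
`A ∩ R = ∅` and `A` meets both `E₁` and `E₂`. -/
def Separates {X : Type*} (R E₁ E₂ A : Set X) : Prop :=
  A ∩ R = ∅ ∧ (A ∩ E₁).Nonempty ∧ (A ∩ E₂).Nonempty

section

variable {X : Type*} [TopologicalSpace X]

theorem frontier_inter_of_subset_union {K A B : Set X} (hA : IsClosed A) (hB : IsClosed B)
    (hAB : Disjoint A B) (hK : K ⊆ A ∪ B) : frontier (K ∩ A) = frontier K ∩ A := by
  have inter_compl_eq {S : Set X} (hS : S ⊆ A ∪ B) : S ∩ Bᶜ = S ∩ A :=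
    Set.ext fun _ => and_congr_right fun hx =>
      ⟨(hS hx).resolve_right, (hAB.subset_compl_right ·)⟩
  have hfrontier : frontier K ⊆ A ∪ B :=
    frontier_subset_closure.trans (closure_minimal hK (hA.union hB))
  have hKA : frontier (K ∩ A) ⊆ Bᶜ :=
    (frontier_subset_closure.trans (closure_minimal Set.inter_subset_right hA)).trans
      hAB.subset_compl_right
  calc frontier (K ∩ A) = frontier (K ∩ A) ∩ Bᶜ := (Set.inter_eq_left.mpr hKA).symm
    _ = frontier (K ∩ Bᶜ) ∩ Bᶜ := by rw [inter_compl_eq hK]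
    _ = frontier K ∩ Bᶜ := frontier_inter_open_inter hB.isOpen_compl
    _ = frontier K ∩ A := inter_compl_eq hfrontier

theorem frontier_inter_nonempty_and_iff [PreconnectedSpace X] {K A B : Set X} (hA : IsClosed A)
    (hB : IsClosed B) (hAB : Disjoint A B) (hK : K ⊆ A ∪ B) :
    (frontier K ∩ A).Nonempty ∧ (frontier K ∩ B).Nonempty ↔
      (K ∩ A).Nonempty ∧ (K ∩ B).Nonempty := by
  have ne_univ {S T : Set X} (hST : Disjoint S T) (hT : (K ∩ T).Nonempty) : K ∩ S ≠ Set.univ := by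
    obtain ⟨x, -, hxT⟩ := hT
    exact Set.nonempty_compl.mp ⟨x, fun hx => hST.notMem_of_mem_left hx.2 hxT⟩
  rw [← frontier_inter_of_subset_union hA hB hAB hK,
    ← frontier_inter_of_subset_union hB hA hAB.symm (Set.union_comm A B ▸ hK),
    nonempty_frontier_iff, nonempty_frontier_iff]
  exact ⟨fun h => ⟨h.1.1, h.2.1⟩,
    fun h => ⟨⟨h.1, ne_univ hAB h.2⟩, ⟨h.2, ne_univ hAB.symm h.1⟩⟩⟩

theorem subset_interior_or_disjoint_closure_of_disjoint_frontier {R G : Set X}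
    (hR : IsPreconnected R) (h : Disjoint R (frontier G)) :
    R ⊆ interior G ∨ Disjoint R (closure G) := by
  rw [← Set.subset_compl_iff_disjoint_right, ← interior_compl]
  refine hR.subset_or_subset isOpen_interior isOpen_interior ?_ ?_
  · exact disjoint_compl_right.mono interior_subset interior_subset
  · rwa [← compl_frontier_eq_union_interior, Set.subset_compl_iff_disjoint_right]

variable {G R E₁ E₂ : Set X}

theorem Separates.subset_of_frontier (hG : IsPreconnected G) (hR : IsPreconnected R)
    (hE₁ : IsClosed E₁) (hE₂ : IsClosed E₂) (hdisj : Disjoint E₁ E₂) (hunion : E₁ ∪ E₂ = Rᶜ)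
    (h : Separates R E₁ E₂ (frontier G)) : R ⊆ G := by
  obtain ⟨hfrontier, hfrontier₁, hfrontier₂⟩ := h
  rcases subset_interior_or_disjoint_closure_of_disjoint_frontier hR
    (Set.disjoint_iff_inter_eq_empty.mpr hfrontier).symm with hRG | hRG
  · exact hRG.trans interior_subset
  · have hcover : closure G ⊆ E₁ ∪ E₂ := hunion ▸ hRG.subset_compl_left
    obtain ⟨x, -, hx⟩ := isPreconnected_closed_iff.mp hG.closure E₁ E₂ hE₁ hE₂ hcover
      (hfrontier₁.mono (Set.inter_subset_inter_left _ frontier_subset_closure))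
      (hfrontier₂.mono (Set.inter_subset_inter_left _ frontier_subset_closure))
    exact (hdisj.notMem_of_mem_left hx.1 hx.2).elim

theorem separates_compl_iff_separates_frontier_of_subset [PreconnectedSpace X]
    (hE₁ : IsClosed E₁) (hE₂ : IsClosed E₂) (hdisj : Disjoint E₁ E₂) (hunion : E₁ ∪ E₂ = Rᶜ)
    (hRG : R ⊆ G) : Separates R E₁ E₂ Gᶜ ↔ Separates R E₁ E₂ (frontier G) := by
  have hRopen : IsOpen R := isClosed_compl_iff.mp (hunion ▸ hE₁.union hE₂)
  have hcompl : Disjoint Gᶜ R := (Set.disjoint_compl_right_iff_subset.mpr hRG).symm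
  have hfrontier : Disjoint (frontier G) R := frontier_compl G ▸ hcompl.frontier_left hRopen
  have hcover : Gᶜ ⊆ E₁ ∪ E₂ := hunion ▸ Set.compl_subset_compl.mpr hRG
  unfold Separates
  rw [← frontier_inter_nonempty_and_iff hE₁ hE₂ hdisj hcover, frontier_compl,
    hcompl.inter_eq, hfrontier.inter_eq]

theorem separates_compl_iff_separates_frontier_general [PreconnectedSpace X]
    (hG : IsPreconnected G) (hR : IsPreconnected R) (hE₁ : IsClosed E₁) (hE₂ : IsClosed E₂)
    (hdisj : Disjoint E₁ E₂) (hunion : E₁ ∪ E₂ = Rᶜ) :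
    Separates R E₁ E₂ Gᶜ ↔ Separates R E₁ E₂ (frontier G) := by
  have iff_of_subset := separates_compl_iff_separates_frontier_of_subset (G := G)
    hE₁ hE₂ hdisj hunion
  constructor <;> intro h
  · have hRG : R ⊆ G :=
      Set.disjoint_compl_left_iff_subset.mp (Set.disjoint_iff_inter_eq_empty.mpr h.1)
    exact (iff_of_subset hRG).mp h
  · have hRG : R ⊆ G := h.subset_of_frontier hG hR hE₁ hE₂ hdisj hunion
    exact (iff_of_subset hRG).mpr h

end

/-- Let `G` be a domain in the Möbius space `S̄ⁿ = ℝⁿ ∪ {∞}` (`n ≥ 2`) whose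
complement `C = S̄ⁿ \ G` contains at least two points, and let `R` be a ring
with complementary components `E₁` and `E₂` (the two connected components of
`S̄ⁿ \ R`). Then `R` separates `C` if and only if `R` separates `∂G`. -/
theorem separates_compl_iff_separates_frontier {n : ℕ} (hn : 2 ≤ n)
    (G R E₁ E₂ : Set (OnePoint (EuclideanSpace ℝ (Fin n))))
    (hGopen : IsOpen G) (hGconn : IsConnected G) (hC : Gᶜ.Nontrivial)
    (hRopen : IsOpen R) (hRconn : IsConnected R)
    (hE₁ : IsConnected E₁) (hE₂ : IsConnected E₂)
    (hE₁c : IsClosed E₁) (hE₂c : IsClosed E₂)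
    (hdisj : Disjoint E₁ E₂) (hunion : E₁ ∪ E₂ = Rᶜ) :
    Separates R E₁ E₂ Gᶜ ↔ Separates R E₁ E₂ (frontier G) := by
  have : Nontrivial (Fin n) := Fin.nontrivial_iff_two_le.mpr hn
  -- This instance makes the one-point compactification connected.
  have : NoncompactSpace (EuclideanSpace ℝ (Fin n)) := NormedSpace.noncompactSpace ℝ _
  exact separates_compl_iff_separates_frontier_general hGconn.isPreconnected
    hRconn.isPreconnected hE₁c hE₂c hdisj hunion
end

section
/- Let n ≥ 2 and let S̄ⁿ = ℝⁿ ∪ {∞} be the one-point compactification of ℝⁿ. Let G ⊆ S̄ⁿ be a domain whose complement C = S̄ⁿ \ G contains at least two points. Then the boundary ∂G (taken in S̄ⁿ) is uniformly perfect if and only if C is uniformly perfect. -/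
open OnePoint

open scoped Classical in
/-- The diameter of a subset `E` of the Möbius space `S̄ⁿ = ℝⁿ ∪ {∞}`:
the Euclidean diameter of `E ∩ ℝⁿ`, and `+∞` when `∞ ∈ E`. -/
noncomputable def mobiusDiam {n : ℕ} (E : Set (OnePoint (EuclideanSpace ℝ (Fin n)))) :
    ENNReal :=
  if (∞ : OnePoint (EuclideanSpace ℝ (Fin n))) ∈ E then ⊤
  else EMetric.diam {x : EuclideanSpace ℝ (Fin n) | (x : OnePoint (EuclideanSpace ℝ (Fin n))) ∈ E}

/-- A set `E ⊆ S̄ⁿ` with at least two points is uniformly perfect if there is a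
constant `c ∈ (0,1)` such that `E` meets the closed annulus
`{x ∈ ℝⁿ : c·r ≤ |x−a| ≤ r}` for every finite `a ∈ E` and every `r ∈ (0, diam E)`. -/
def MobiusUniformlyPerfect {n : ℕ} (E : Set (OnePoint (EuclideanSpace ℝ (Fin n)))) : Prop :=
  ∃ c : ℝ, 0 < c ∧ c < 1 ∧
    ∀ a : EuclideanSpace ℝ (Fin n), (a : OnePoint (EuclideanSpace ℝ (Fin n))) ∈ E →
      ∀ r : ℝ, 0 < r → ENNReal.ofReal r < mobiusDiam E →
        ∃ x : EuclideanSpace ℝ (Fin n),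
          (x : OnePoint (EuclideanSpace ℝ (Fin n))) ∈ E ∧
          c * r ≤ ‖x - a‖ ∧ ‖x - a‖ ≤ r

/-!
Let `C = Gᶜ`, so `∂G = ∂C ⊆ C`. Everything rests on the fact that a connected set missing `∂C` lies
either in `C` or in `G`.

Suppose `∂C` is uniformly perfect with constant `c`, and let `a ∈ C` and `r < diam C`. If the ball
of radius `c r / 4` about `a` misses `∂C`, it lies in `C`, and any point of its sphere is as
required. Otherwise it contains some `b ∈ ∂C`. If `diam ∂C > r / 2`, take a point of `∂C` in the
annulus of radii `c r / 2` and `r / 2` about `b`. If `diam ∂C ≤ r / 2`, the complement in `S̄ⁿ` of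
the ball of radius `r / 2` about `b` is connected and misses `∂C`. It cannot lie in `G`, because
`diam C > r`, so it lies in `C`, and so does the sphere of radius `r` about `a`.

Suppose `C` is uniformly perfect with constant `c`, and let `a ∈ ∂C` and `r < diam ∂C`. Take `x ∈ C`
with `c r / 2 ≤ ρ ≤ r / 2`, where `ρ = |x - a|`. If the sphere of radius `ρ` about `a` missed `∂C`,
it would lie in `C`, being connected for `n ≥ 2`. The connected set `G`, which accumulates at `a`,
would then lie inside this sphere, giving `diam ∂C ≤ 2 ρ ≤ r`, a contradiction.
-/

open Filter Metric Set

/-- The diameter of a subset `E` of the one-point compactification of a metric space `X`: the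
diameter of `E ∩ X`, and `∞` when `E` contains the point at infinity. For Euclidean spaces this is
`mobiusDiam`. -/
noncomputable def onePointDiam {X : Type*} [PseudoEMetricSpace X] (E : Set (OnePoint X)) :
    ENNReal :=
  open scoped Classical in if ∞ ∈ E then ⊤ else ediam ((↑) ⁻¹' E : Set X)

/-- Uniform perfectness with constant `c` of a subset `E` of the one-point compactification of a
metric space: `E` meets every annulus of ratio `c` centred at a finite point of `E` whose outer
radius is less than the diameter of `E`. -/
def IsUniformlyPerfectWith {X : Type*} [PseudoMetricSpace X] (c : ℝ) (E : Set (OnePoint X)) :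
    Prop :=
  ∀ a : X, ↑a ∈ E → ∀ r : ℝ, 0 < r → ENNReal.ofReal r < onePointDiam E →
    ∃ x : X, ↑x ∈ E ∧ c * r ≤ dist x a ∧ dist x a ≤ r

/-- Uniform perfectness of a subset of the one-point compactification of a metric space. For
Euclidean spaces this is `MobiusUniformlyPerfect`; as there, the requirement that the set have two
points is not part of the definition. -/
def IsUniformlyPerfect {X : Type*} [PseudoMetricSpace X] (E : Set (OnePoint X)) : Prop :=
  ∃ c : ℝ, 0 < c ∧ c < 1 ∧ IsUniformlyPerfectWith c E

lemma subset_or_subset_compl_of_disjoint_frontier {X : Type*} [TopologicalSpace X] {S T : Set X}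
    (hT : IsPreconnected T) (hTS : Disjoint T (frontier S)) : T ⊆ S ∨ T ⊆ Sᶜ := by
  have hcover : T ⊆ interior S ∪ interior Sᶜ := by
    rw [← compl_frontier_eq_union_interior]
    exact hTS.subset_compl_right
  have hdisj : Disjoint (interior S) (interior Sᶜ) :=
    disjoint_compl_right.mono interior_subset interior_subset
  rcases hT.subset_or_subset isOpen_interior isOpen_interior hdisj hcover with h | h
  · exact .inl (h.trans interior_subset)
  · exact .inr (h.trans interior_subset)

lemma image_coe_subset_or_subset_compl {X : Type*} [TopologicalSpace X]
    {S : Set (OnePoint X)} {T : Set X} (hT : IsPreconnected T)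
    (hTS : ∀ x ∈ T, (x : OnePoint X) ∉ frontier S) : (↑) '' T ⊆ S ∨ (↑) '' T ⊆ Sᶜ :=
  subset_or_subset_compl_of_disjoint_frontier (hT.image _ continuous_coe.continuousOn)
    (disjoint_left.2 (forall_mem_image.2 hTS))

section Metric

variable {X : Type*}

lemma onePointDiam_mono [PseudoEMetricSpace X] {S T : Set (OnePoint X)} (h : S ⊆ T) :
    onePointDiam S ≤ onePointDiam T := by
  unfold onePointDiam
  split_ifs with hS hT
  · exact le_rfl
  · exact absurd (h hS) hT
  · exact le_top
  · exact ediam_mono (preimage_mono h)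

lemma onePointDiam_image_coe [PseudoEMetricSpace X] (s : Set X) :
    onePointDiam ((↑) '' s : Set (OnePoint X)) = ediam s := by
  rw [onePointDiam, if_neg infty_notMem_image_coe, preimage_image_eq s coe_injective]

variable [PseudoMetricSpace X] {F : Set (OnePoint X)} {a : X} {r : ℝ}

lemma onePointDiam_image_coe_closedBall_le (hr : 0 ≤ r) :
    onePointDiam ((↑) '' closedBall a r : Set (OnePoint X)) ≤ ENNReal.ofReal (2 * r) := by
  rw [onePointDiam_image_coe, ← closedEBall_ofReal hr, ENNReal.ofReal_mul zero_le_two,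
    ENNReal.ofReal_ofNat]
  exact ediam_closedEBall_le

lemma subset_image_coe_closedBall_of_onePointDiam_le (hr : 0 ≤ r) (ha : ↑a ∈ F)
    (hF : onePointDiam F ≤ ENNReal.ofReal r) : F ⊆ (↑) '' closedBall a r := by
  unfold onePointDiam at hF
  split_ifs at hF with hinf
  · exact absurd hF (not_le.2 ENNReal.ofReal_lt_top)
  · intro z hz
    induction z using OnePoint.rec with
    | infty => exact absurd hz hinf
    | coe z => exact mem_image_of_mem _ ((edist_le_ofReal hr).1 (edist_le_of_ediam_le hz ha hF))

lemma isClosed_image_coe_closedBall [ProperSpace X] (a : X) (r : ℝ) :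
    IsClosed ((↑) '' closedBall a r : Set (OnePoint X)) :=
  isClosed_image_coe.2 ⟨isClosed_closedBall, isCompact_closedBall a r⟩

lemma frontier_image_coe_ball_subset [ProperSpace X] (a : X) (r : ℝ) :
    frontier ((↑) '' ball a r : Set (OnePoint X)) ⊆ (↑) '' sphere a r := by
  rw [(isOpen_image_coe.2 isOpen_ball).frontier_eq, ← closedBall_sdiff_ball,
    image_sdiff coe_injective]
  exact sdiff_subset_sdiff_left
    (closure_minimal (image_mono ball_subset_closedBall) (isClosed_image_coe_closedBall a r))

lemma subset_image_coe_ball_of_image_coe_sphere_subset_compl [ProperSpace X] {G : Set (OnePoint X)}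
    (hG : IsPreconnected G) (ha : ↑a ∈ closure G) (hr : 0 < r)
    (hsphere : (↑) '' sphere a r ⊆ Gᶜ) : G ⊆ (↑) '' ball a r := by
  have hdisj : Disjoint G (frontier ((↑) '' ball a r)) :=
    disjoint_compl_right.mono_right ((frontier_image_coe_ball_subset a r).trans hsphere)
  obtain ⟨z, hzball, hzG⟩ := mem_closure_iff.1 ha _ (isOpen_image_coe.2 isOpen_ball)
    (mem_image_of_mem _ (mem_ball_self hr))
  exact (subset_or_subset_compl_of_disjoint_frontier hG hdisj).resolve_right
    fun hcompl => hcompl hzG hzball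

lemma onePointDiam_frontier_le_of_image_coe_sphere_subset [ProperSpace X]
    (hFc : IsPreconnected Fᶜ) (ha : ↑a ∈ frontier F) (hr : 0 < r)
    (hsphere : (↑) '' sphere a r ⊆ F) : onePointDiam (frontier F) ≤ ENNReal.ofReal (2 * r) := by
  rw [← frontier_compl] at ha ⊢
  have hball : Fᶜ ⊆ (↑) '' closedBall a r :=
    (subset_image_coe_ball_of_image_coe_sphere_subset_compl hFc (frontier_subset_closure ha) hr
      (by rwa [compl_compl])).trans (image_mono ball_subset_closedBall)
  have hfrontier : frontier Fᶜ ⊆ (↑) '' closedBall a r :=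
    frontier_subset_closure.trans (closure_minimal hball (isClosed_image_coe_closedBall a r))
  exact (onePointDiam_mono hfrontier).trans (onePointDiam_image_coe_closedBall_le hr.le)

theorem isUniformlyPerfectWith_frontier [ProperSpace X]
    (hX : ∀ (a : X) (ρ : ℝ), IsPreconnected (sphere a ρ)) {c : ℝ} (hc : 0 < c)
    (hF : IsClosed F) (hFc : IsPreconnected Fᶜ) (h : IsUniformlyPerfectWith c F) :
    IsUniformlyPerfectWith (c / 2) (frontier F) := by
  intro a ha r hr hrdiam
  have hrF : ENNReal.ofReal (r / 2) < onePointDiam F :=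
    (ENNReal.ofReal_le_ofReal (by linarith)).trans_lt
      (hrdiam.trans_le (onePointDiam_mono hF.frontier_subset))
  obtain ⟨x, hxF, hcx, hxr⟩ := h a (hF.frontier_subset ha) (r / 2) (by positivity) hrF
  set ρ := dist x a
  have hρ : 0 < ρ := lt_of_lt_of_le (by positivity) hcx
  by_cases hmeet : ∃ y ∈ sphere a ρ, (y : OnePoint X) ∈ frontier F
  · obtain ⟨y, hy, hyF⟩ := hmeet
    rw [mem_sphere] at hy
    exact ⟨y, hyF, by linarith, by linarith⟩
  · push Not at hmeet
    have hsphere : (↑) '' sphere a ρ ⊆ F :=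
      (image_coe_subset_or_subset_compl (hX a ρ) hmeet).resolve_right
        fun hcompl => hcompl (mem_image_of_mem _ (mem_sphere.2 rfl)) hxF
    have hdiam := onePointDiam_frontier_le_of_image_coe_sphere_subset hFc ha hρ hsphere
    exact absurd hrdiam
      (hdiam.trans (ENNReal.ofReal_le_ofReal (by linarith))).not_gt

end Metric

section NormedSpace

variable {E : Type*} [NormedAddCommGroup E] [NormedSpace ℝ E]

lemma infty_mem_closure_image_coe_ray {a x : E} (hx : x ≠ a) :
    ∞ ∈ closure ((↑) '' (AffineMap.lineMap a x '' Ici (1 : ℝ)) : Set (OnePoint E)) := by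
  have hdist : Tendsto (fun t : ℝ => dist (AffineMap.lineMap a x t) a) atTop atTop := by
    simp only [dist_lineMap_left]
    exact tendsto_norm_atTop_atTop.atTop_mul_const (dist_pos.2 hx.symm)
  have hray : Tendsto (fun t : ℝ => AffineMap.lineMap a x t) atTop (coclosedCompact E) := by
    refine Tendsto.mono_right ?_ (cobounded_le_cocompact.trans cocompact_le_coclosedCompact)
    rw [← comap_dist_right_atTop a]
    exact tendsto_comap_iff.2 hdist
  refine mem_closure_of_tendsto (tendsto_coe_infty.comp hray) ?_
  filter_upwards [Ici_mem_atTop (1 : ℝ)] with t ht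
  exact mem_image_of_mem _ (mem_image_of_mem _ ht)

lemma isPreconnected_compl_image_coe_closedBall (a : E) {r : ℝ} (hr : 0 ≤ r) :
    IsPreconnected ((↑) '' closedBall a r : Set (OnePoint E))ᶜ := by
  refine isPreconnected_of_forall ∞ fun z hz => ?_
  induction z using OnePoint.rec with
  | infty => exact ⟨{∞}, by simp, rfl, rfl, isPreconnected_singleton⟩
  | coe x =>
    have hx : r < dist x a := by simpa using hz
    set ray : Set E := AffineMap.lineMap a x '' Ici (1 : ℝ)
    have hray : IsPreconnected ((↑) '' ray : Set (OnePoint E)) :=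
      (isPreconnected_Ici.image _ AffineMap.lineMap_continuous.continuousOn).image _
        continuous_coe.continuousOn
    have hfar : ∀ y ∈ ray, r < dist y a := by
      rintro _ ⟨t, ht, rfl⟩
      rw [dist_lineMap_left, dist_comm a]
      exact hx.trans_le (le_mul_of_one_le_left dist_nonneg (ht.trans (Real.le_norm_self t)))
    refine ⟨insert ∞ ((↑) '' ray), ?_, mem_insert _ _, ?_, ?_⟩
    · rw [insert_subset_iff]
      refine ⟨infty_notMem_image_coe, ?_⟩
      rintro _ ⟨y, hy, rfl⟩
      simpa using hfar y hy
    · exact mem_insert_of_mem _ (mem_image_of_mem _ ⟨1, self_mem_Ici, by simp⟩)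
    · exact hray.subset_closure (subset_insert _ _) (insert_subset
        (infty_mem_closure_image_coe_ray (dist_pos.1 (hr.trans_lt hx))) subset_closure)

lemma compl_image_coe_closedBall_subset_of_onePointDiam_frontier_le {F : Set (OnePoint E)} {b : E}
    {r : ℝ} (hr : 0 ≤ r) (hb : ↑b ∈ frontier F)
    (hfrontier : onePointDiam (frontier F) ≤ ENNReal.ofReal r)
    (hF : ENNReal.ofReal (2 * r) < onePointDiam F) : ((↑) '' closedBall b r)ᶜ ⊆ F := by
  have hdisj : Disjoint ((↑) '' closedBall b r)ᶜ (frontier F) :=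
    disjoint_compl_left_iff_subset.2
      (subset_image_coe_closedBall_of_onePointDiam_le hr hb hfrontier)
  refine (subset_or_subset_compl_of_disjoint_frontier
    (isPreconnected_compl_image_coe_closedBall b hr) hdisj).resolve_right fun hcompl => hF.not_ge ?_
  exact (onePointDiam_mono (compl_subset_compl.1 hcompl)).trans
    (onePointDiam_image_coe_closedBall_le hr)

theorem isUniformlyPerfectWith_of_frontier [Nontrivial E] {F : Set (OnePoint E)} {c : ℝ}
    (hc : 0 ≤ c) (hc1 : c ≤ 1) (hF : IsClosed F)
    (h : IsUniformlyPerfectWith c (frontier F)) : IsUniformlyPerfectWith (c / 4) F := by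
  intro a ha r hr hrF
  have hδ : 0 ≤ c / 4 * r := by positivity
  have hδr : c / 4 * r ≤ r / 4 := by nlinarith
  by_cases hnear : ∃ b ∈ closedBall a (c / 4 * r), (b : OnePoint E) ∈ frontier F
  · obtain ⟨b, hba, hb⟩ := hnear
    rw [mem_closedBall] at hba
    rcases lt_or_ge (ENNReal.ofReal (r / 2)) (onePointDiam (frontier F)) with hdiam | hdiam
    · obtain ⟨x, hx, hcx, hxr⟩ := h b hb (r / 2) (by positivity) hdiam
      refine ⟨x, hF.frontier_subset hx, ?_, ?_⟩
      · linarith [dist_triangle_right x b a]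
      · linarith [dist_triangle x b a]
    · obtain ⟨x, hx⟩ := NormedSpace.sphere_nonempty (x := a).2 hr.le
      rw [mem_sphere] at hx
      have hxb : r / 2 < dist x b := by linarith [dist_triangle x b a]
      have houter : ((↑) '' closedBall b (r / 2))ᶜ ⊆ F :=
        compl_image_coe_closedBall_subset_of_onePointDiam_frontier_le (by positivity) hb hdiam
          (by rwa [mul_div_cancel₀ r two_ne_zero])
      exact ⟨x, houter (by simpa using hxb), by linarith, hx.le⟩
  · push Not at hnear
    have hball : (↑) '' closedBall a (c / 4 * r) ⊆ F :=
      (image_coe_subset_or_subset_compl (convex_closedBall a _).isPreconnected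
        hnear).resolve_right fun hcompl =>
          hcompl (mem_image_of_mem _ (mem_closedBall_self hδ)) ha
    obtain ⟨x, hx⟩ := NormedSpace.sphere_nonempty (x := a).2 hδ
    refine ⟨x, hball (mem_image_of_mem _ (sphere_subset_closedBall hx)), ?_, ?_⟩
    · exact (mem_sphere.1 hx).ge
    · linarith [mem_sphere.1 hx]

end NormedSpace

theorem frontier_uniformlyPerfect_iff_compl_general {E : Type*} [NormedAddCommGroup E]
    [NormedSpace ℝ E] [ProperSpace E] (hE : 1 < Module.rank ℝ E) {G : Set (OnePoint E)}
    (hGopen : IsOpen G) (hGconn : IsPreconnected G) :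
    IsUniformlyPerfect (frontier G) ↔ IsUniformlyPerfect Gᶜ := by
  have : Nontrivial E := rank_pos_iff_nontrivial.1 (zero_lt_one.trans hE)
  constructor
  · rintro ⟨c, hc, hc1, h⟩
    refine ⟨c / 4, by positivity, by linarith, ?_⟩
    exact isUniformlyPerfectWith_of_frontier hc.le hc1.le hGopen.isClosed_compl
      (by rwa [frontier_compl])
  · rintro ⟨c, hc, hc1, h⟩
    refine ⟨c / 2, by positivity, by linarith, ?_⟩
    rw [← frontier_compl]
    exact isUniformlyPerfectWith_frontier (isPreconnected_sphere hE) hc hGopen.isClosed_compl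
      (by rwa [compl_compl]) h

lemma isUniformlyPerfect_iff_mobiusUniformlyPerfect {n : ℕ}
    {E : Set (OnePoint (EuclideanSpace ℝ (Fin n)))} :
    IsUniformlyPerfect E ↔ MobiusUniformlyPerfect E := by
  simp only [IsUniformlyPerfect, IsUniformlyPerfectWith, dist_eq_norm]
  rfl

lemma one_lt_rank_euclideanSpace {n : ℕ} (hn : 1 < n) :
    1 < Module.rank ℝ (EuclideanSpace ℝ (Fin n)) := by
  rw [← Module.finrank_eq_rank, finrank_euclideanSpace_fin]
  exact_mod_cast hn

/-- Let `G` be a domain in the Möbius space `S̄ⁿ = ℝⁿ ∪ {∞}` (`n ≥ 2`) whose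
complement `C = S̄ⁿ \ G` contains at least two points. Then the boundary `∂G`
is uniformly perfect if and only if `C` is uniformly perfect. -/
theorem frontier_uniformlyPerfect_iff_compl {n : ℕ} (hn : 2 ≤ n)
    (G : Set (OnePoint (EuclideanSpace ℝ (Fin n))))
    (hGopen : IsOpen G) (hGconn : IsConnected G) (hC : Gᶜ.Nontrivial) :
    MobiusUniformlyPerfect (frontier G) ↔ MobiusUniformlyPerfect Gᶜ := by
  simpa only [isUniformlyPerfect_iff_mobiusUniformlyPerfect] using
    frontier_uniformlyPerfect_iff_compl_general (one_lt_rank_euclideanSpace hn) hGopen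
      hGconn.isPreconnected
end

section
/- Let n ≥ 2 and let (s_k)_{k≥1} and (r_k)_{k≥1} be sequences of positive real numbers decreasing to 0 satisfying α_k := s_k − r_k − (s_{k+1} + r_{k+1}) > 0 for all k ≥ 1, and set r'_k = r_k + min(α_{k−1}, α_k) for k ≥ 2. Let e₁ be a unit vector in ℝⁿ and C = {0} ∪ ⋃_{k≥1} B̄ⁿ(s_k e₁, r_k), where B̄ⁿ(x, r) is the closed ball of center x and radius r. If limsup_{k→∞} r'_k/r_k = +∞, then the compact set C is not uniformly perfect: for every c ∈ (0,1) there exist a ∈ C and r ∈ (0, diam(C)) such that C ∩ {x ∈ ℝⁿ : c·r ≤ |x−a| ≤ r} = ∅. -/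
open Metric

/-!
Around the centre `a = s_k e` of the `k`-th ball, the set `C` has no point at distance strictly
between `r_k` and `r'_k`. If `r'_k > r_k / c`, any `ρ` strictly between `r_k / c` and `r'_k`
therefore gives an annulus `c ρ ≤ |x - a| ≤ ρ` that misses `C`. Such a `ρ` is an admissible scale
because `r'_k ≤ s_k = |0 - a| ≤ diam C`.
-/

theorem exists_annulus_eq_empty_of_inter_ball_subset {X : Type*} [PseudoMetricSpace X] {C : Set X}
    {a : X} {R R' c : ℝ} (hR : 0 ≤ R) (hc : 0 < c) (hRR' : R / c < R') (hdiam : R' ≤ diam C)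
    (hgap : C ∩ ball a R' ⊆ closedBall a R) :
    ∃ ρ : ℝ, 0 < ρ ∧ ρ < diam C ∧ {x ∈ C | c * ρ ≤ dist x a ∧ dist x a ≤ ρ} = ∅ := by
  obtain ⟨ρ, hRρ, hρR'⟩ := exists_between hRR'
  refine ⟨ρ, (div_nonneg hR hc.le).trans_lt hRρ, hρR'.trans_le hdiam, ?_⟩
  refine Set.eq_empty_of_forall_notMem fun x ⟨hxC, hcρx, hxρ⟩ ↦ ?_
  have hxR : dist x a ≤ R := hgap ⟨hxC, hxρ.trans_lt hρR'⟩
  exact ((div_lt_iff₀' hc).1 hRρ).not_ge (hcρx.trans hxR)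

/-- The radius `r'_k = r_k + min(α_{k-1}, α_k)`, where `α_k = s_k - r_k - (s_{k+1} + r_{k+1})` is
the gap between the intervals `[s_k - r_k, s_k + r_k]` and `[s_{k+1} - r_{k+1}, s_{k+1} + r_{k+1}]`.
It is meaningful for `k ≥ 2` only; in `α_{k-1}` the index `k - 1 + 1` is written `k`. -/
def outerRadius (s r : ℕ → ℝ) (k : ℕ) : ℝ :=
  r k + min (s (k - 1) - r (k - 1) - (s k + r k)) (s k - r k - (s (k + 1) + r (k + 1)))

section Sequences

variable {s r : ℕ → ℝ}

theorem antitoneOn_sub_of_gap_pos (hr : ∀ k, 1 ≤ k → 0 ≤ r k)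
    (hgap : ∀ k, 1 ≤ k → 0 < s k - r k - (s (k + 1) + r (k + 1))) :
    AntitoneOn (fun k ↦ s k - r k) (Set.Ici 1) :=
  antitoneOn_nat_Ici_of_succ_le fun k hk ↦ by
    linarith [hgap k hk, hr (k + 1) (Nat.le_add_left 1 k)]

theorem antitoneOn_add_of_gap_pos (hr : ∀ k, 1 ≤ k → 0 ≤ r k)
    (hgap : ∀ k, 1 ≤ k → 0 < s k - r k - (s (k + 1) + r (k + 1))) :
    AntitoneOn (fun k ↦ s k + r k) (Set.Ici 1) :=
  antitoneOn_nat_Ici_of_succ_le fun k hk ↦ by linarith [hgap k hk, hr k hk]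

theorem outerRadius_le_sub_left (s r : ℕ → ℝ) (k : ℕ) :
    outerRadius s r k ≤ s (k - 1) - r (k - 1) - s k := by
  unfold outerRadius
  linarith [min_le_left (s (k - 1) - r (k - 1) - (s k + r k))
    (s k - r k - (s (k + 1) + r (k + 1)))]

theorem outerRadius_le_sub_right (s r : ℕ → ℝ) (k : ℕ) :
    outerRadius s r k ≤ s k - (s (k + 1) + r (k + 1)) := by
  unfold outerRadius
  linarith [min_le_right (s (k - 1) - r (k - 1) - (s k + r k))
    (s k - r k - (s (k + 1) + r (k + 1)))]

theorem outerRadius_le_center (hs : ∀ k, 1 ≤ k → 0 ≤ s k) (hr : ∀ k, 1 ≤ k → 0 ≤ r k) (k : ℕ) :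
    outerRadius s r k ≤ s k := by
  have hk : 1 ≤ k + 1 := Nat.le_add_left 1 k
  linarith [outerRadius_le_sub_right s r k, hs (k + 1) hk, hr (k + 1) hk]

theorem outerRadius_le_abs_sub_sub (hr : ∀ k, 1 ≤ k → 0 ≤ r k)
    (hgap : ∀ k, 1 ≤ k → 0 < s k - r k - (s (k + 1) + r (k + 1)))
    {j k : ℕ} (hj : 1 ≤ j) (hjk : j ≠ k) :
    outerRadius s r k ≤ |s j - s k| - r j := by
  rcases hjk.lt_or_gt with hlt | hgt
  · have hjk' : j ≤ k - 1 := Nat.le_sub_one_of_lt hlt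
    have hleft : s (k - 1) - r (k - 1) ≤ s j - r j :=
      antitoneOn_sub_of_gap_pos hr hgap hj (hj.trans hjk') hjk'
    linarith [outerRadius_le_sub_left s r k, le_abs_self (s j - s k)]
  · have hright : s j + r j ≤ s (k + 1) + r (k + 1) :=
      antitoneOn_add_of_gap_pos hr hgap (Nat.le_add_left 1 k) hj hgt
    linarith [outerRadius_le_sub_right s r k, neg_abs_le (s j - s k)]

end Sequences

section BallChain

variable {E : Type*} [SeminormedAddCommGroup E] [NormedSpace ℝ E] {e : E} {s r : ℕ → ℝ}

/-- The set `C` of the example: the origin and a chain of closed balls centred on the line `ℝ e`.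
The balls are numbered from `1`, so `s 0` and `r 0` are irrelevant. -/
def ballChain (e : E) (s r : ℕ → ℝ) : Set E :=
  {0} ∪ ⋃ k ∈ {k : ℕ | 1 ≤ k}, closedBall (s k • e) (r k)

theorem mem_ballChain {x : E} :
    x ∈ ballChain e s r ↔ x = 0 ∨ ∃ k, 1 ≤ k ∧ dist x (s k • e) ≤ r k := by
  simp [ballChain]

theorem zero_mem_ballChain (e : E) (s r : ℕ → ℝ) : 0 ∈ ballChain e s r :=
  mem_ballChain.2 (.inl rfl)

theorem center_mem_ballChain {k : ℕ} (hk : 1 ≤ k) (hr : 0 ≤ r k) : s k • e ∈ ballChain e s r :=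
  mem_ballChain.2 (.inr ⟨k, hk, by rwa [dist_self]⟩)

theorem dist_smul_smul_of_norm_eq_one (he : ‖e‖ = 1) (a b : ℝ) :
    dist (a • e) (b • e) = |a - b| :=
  (LinearIsometry.toSpanSingleton ℝ E he).dist_map a b

theorem norm_smul_of_norm_eq_one (he : ‖e‖ = 1) {a : ℝ} (ha : 0 ≤ a) : ‖a • e‖ = a := by
  rw [norm_smul_of_nonneg ha, he, mul_one]

theorem isBounded_ballChain (he : ‖e‖ = 1) (hs : ∀ k, 1 ≤ k → 0 ≤ s k)
    (hr : ∀ k, 1 ≤ k → 0 ≤ r k)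
    (hgap : ∀ k, 1 ≤ k → 0 < s k - r k - (s (k + 1) + r (k + 1))) :
    Bornology.IsBounded (ballChain e s r) := by
  refine isBounded_iff_forall_norm_le.2 ⟨s 1 + r 1, fun x hx ↦ ?_⟩
  rcases mem_ballChain.1 hx with rfl | ⟨k, hk, hxk⟩
  · simpa only [norm_zero] using add_nonneg (hs 1 le_rfl) (hr 1 le_rfl)
  · calc ‖x‖ ≤ ‖s k • e‖ + dist x (s k • e) := by
          simpa only [dist_eq_norm] using norm_le_norm_add_norm_sub' x (s k • e)
      _ ≤ s k + r k := add_le_add (norm_smul_of_norm_eq_one he (hs k hk)).le hxk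
      _ ≤ s 1 + r 1 := antitoneOn_add_of_gap_pos hr hgap Set.self_mem_Ici hk hk

theorem outerRadius_le_diam_ballChain (he : ‖e‖ = 1) (hs : ∀ k, 1 ≤ k → 0 ≤ s k)
    (hr : ∀ k, 1 ≤ k → 0 ≤ r k)
    (hgap : ∀ k, 1 ≤ k → 0 < s k - r k - (s (k + 1) + r (k + 1))) {k : ℕ} (hk : 1 ≤ k) :
    outerRadius s r k ≤ diam (ballChain e s r) :=
  calc outerRadius s r k ≤ s k := outerRadius_le_center hs hr k
    _ = dist (s k • e) 0 := by rw [dist_zero_right, norm_smul_of_norm_eq_one he (hs k hk)]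
    _ ≤ diam (ballChain e s r) := dist_le_diam_of_mem (isBounded_ballChain he hs hr hgap)
      (center_mem_ballChain hk (hr k hk)) (zero_mem_ballChain e s r)

theorem ballChain_inter_ball_outerRadius_subset (he : ‖e‖ = 1) (hs : ∀ k, 1 ≤ k → 0 ≤ s k)
    (hr : ∀ k, 1 ≤ k → 0 ≤ r k)
    (hgap : ∀ k, 1 ≤ k → 0 < s k - r k - (s (k + 1) + r (k + 1))) {k : ℕ} (hk : 1 ≤ k) :
    ballChain e s r ∩ ball (s k • e) (outerRadius s r k) ⊆ closedBall (s k • e) (r k) := by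
  rintro x ⟨hxC, hx : dist x (s k • e) < outerRadius s r k⟩
  rcases mem_ballChain.1 hxC with rfl | ⟨j, hj, hxj⟩
  · rw [dist_zero_left, norm_smul_of_norm_eq_one he (hs k hk)] at hx
    exact absurd (outerRadius_le_center hs hr k) hx.not_ge
  · by_cases hjk : j = k
    · exact hjk ▸ hxj
    · have htriangle : |s j - s k| ≤ dist x (s j • e) + dist x (s k • e) :=
        dist_smul_smul_of_norm_eq_one he (s j) (s k) ▸ dist_triangle_left _ _ x
      linarith [outerRadius_le_abs_sub_sub hr hgap hj hjk]

theorem not_uniformly_perfect_example_general (he : ‖e‖ = 1) (hs : ∀ k, 1 ≤ k → 0 < s k)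
    (hr : ∀ k, 1 ≤ k → 0 < r k)
    (hgap : ∀ k, 1 ≤ k → 0 < s k - r k - (s (k + 1) + r (k + 1)))
    (hlimsup : ∀ M : ℝ, ∃ k, 2 ≤ k ∧ M < outerRadius s r k / r k) {c : ℝ} (hc : 0 < c) :
    ∃ a ∈ ballChain e s r, ∃ ρ : ℝ, 0 < ρ ∧ ρ < diam (ballChain e s r) ∧
      {x ∈ ballChain e s r | c * ρ ≤ ‖x - a‖ ∧ ‖x - a‖ ≤ ρ} = ∅ := by
  have hs₀ : ∀ k, 1 ≤ k → 0 ≤ s k := fun k hk ↦ (hs k hk).le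
  have hr₀ : ∀ k, 1 ≤ k → 0 ≤ r k := fun k hk ↦ (hr k hk).le
  obtain ⟨k, hk₂, hratio⟩ := hlimsup (1 / c)
  have hk : 1 ≤ k := one_le_two.trans hk₂
  have hlt : r k / c < outerRadius s r k := by
    rwa [lt_div_iff₀ (hr k hk), one_div_mul_eq_div] at hratio
  refine ⟨s k • e, center_mem_ballChain hk (hr₀ k hk), ?_⟩
  simpa only [dist_eq_norm] using
    exists_annulus_eq_empty_of_inter_ball_subset (hr₀ k hk) hc hlt
      (outerRadius_le_diam_ballChain he hs₀ hr₀ hgap hk)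
      (ballChain_inter_ball_outerRadius_subset he hs₀ hr₀ hgap hk)

end BallChain

/-- Martio–Sarvas type example: let `(s_k)`, `(r_k)` (`k ≥ 1`) be sequences of
positive numbers decreasing to `0` with
`α_k := s_k − r_k − (s_{k+1} + r_{k+1}) > 0`, let `e₁` be a unit vector and
`C = {0} ∪ ⋃_{k ≥ 1} B̄ⁿ(s_k e₁, r_k)`. If `limsup r'_k / r_k = +∞`, where
`r'_k = r_k + min(α_{k−1}, α_k)`, then `C` is not uniformly perfect: for every
`c ∈ (0,1)` there exist `a ∈ C` and `ρ ∈ (0, diam C)` such that the closed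
annulus `{x : c·ρ ≤ |x−a| ≤ ρ}` misses `C`. -/
theorem not_uniformly_perfect_example {n : ℕ} (hn : 2 ≤ n)
    (e₁ : EuclideanSpace ℝ (Fin n)) (he₁ : ‖e₁‖ = 1)
    (s r : ℕ → ℝ)
    (hspos : ∀ k, 1 ≤ k → 0 < s k) (hrpos : ∀ k, 1 ≤ k → 0 < r k)
    (hsdec : ∀ k, 1 ≤ k → s (k + 1) ≤ s k) (hrdec : ∀ k, 1 ≤ k → r (k + 1) ≤ r k)
    (hslim : Filter.Tendsto s Filter.atTop (nhds 0))
    (hrlim : Filter.Tendsto r Filter.atTop (nhds 0))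
    (halpha : ∀ k, 1 ≤ k → 0 < s k - r k - (s (k + 1) + r (k + 1)))
    (C : Set (EuclideanSpace ℝ (Fin n)))
    (hC : C = {0} ∪ ⋃ k ∈ {k : ℕ | 1 ≤ k}, Metric.closedBall (s k • e₁) (r k))
    -- `limsup_{k→∞} r'_k / r_k = +∞`, where
    -- `r'_k = r_k + min(α_{k−1}, α_k)` and `α_k = s_k − r_k − (s_{k+1} + r_{k+1})`:
    (hlimsup : ∀ M : ℝ, ∃ k, 2 ≤ k ∧ M <
      (r k + min (s (k - 1) - r (k - 1) - (s k + r k))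
                 (s k - r k - (s (k + 1) + r (k + 1)))) / r k) :
    ∀ c : ℝ, 0 < c → c < 1 →
      ∃ a ∈ C, ∃ ρ : ℝ, 0 < ρ ∧ ρ < Metric.diam C ∧
        {x ∈ C | c * ρ ≤ ‖x - a‖ ∧ ‖x - a‖ ≤ ρ} = ∅ := by
  subst hC
  exact fun c hc _ ↦ not_uniformly_perfect_example_general he₁ hspos hrpos halpha hlimsup hc
end
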